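/- Let $n \ge 1$, $L_1, L_2 > 0$, $B = [0,L_1]\times[0,L_2]$, let $\mathcal{H}(z^1,z^2, x, x_{[10]}, x_{[01]}, x_{[20]}, x_{[11]}, x_{[02]})$ be a smooth second-order density with $x$-slots in $\mathbb{R}^n$, and let $x : \mathbb{R}\times B \to \mathbb{R}^n$ be smooth. Define $\mathscr{H}(t) = \iint_B \mathcal{H}[x]\,dz^1 dz^2$. Then for every $t$: $\frac{d\mathscr{H}}{dt} = \iint_B \dot{x}^\alpha\,\delta_\alpha\mathcal{H}[x]\,dz^1dz^2 \;+\; \int_0^{L_2}\Big[\dot{x}^\alpha\big(\mathcal{H}^{[10]}_\alpha - \partial_1\mathcal{H}^{[20]}_\alpha - \partial_2\mathcal{H}^{[11]}_\alpha\big) + \dot{x}^\alpha_{[10]}\mathcal{H}^{[20]}_\alpha\Big]_{z^1=0}^{z^1=L_1} dz^2 \;+\; \int_0^{L_1}\Big[\dot{x}^\alpha\big(\mathcal{H}^{[01]}_\alpha - \partial_2\mathcal{H}^{[02]}_\alpha - \partial_1\mathcal{H}^{[11]}_\alpha\big) + \dot{x}^\alpha_{[01]}\mathcal{H}^{[02]}_\alpha\Big]_{z^2=0}^{z^2=L_2}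 dz^1 \;+\; \Big[\big[\dot{x}^\alpha\,\mathcal{H}^{[11]}_\alpha\big]_{z^1=0}^{z^1=L_1}\Big]_{z^2=0}^{z^2=L_2}$, where $\mathcal{H}^{[J]}_\alpha$ abbreviates the composed partial derivative $(\partial_{x^\alpha_{[J]}}\mathcal{H})[x]$, summation over $\alpha$ is understood, and $\dot{x} = \partial_t x$, $x_{[10]} = \partial_1 x$, $x_{[01]} = \partial_2 x$. -/

import Mathlib

open MeasureTheory

/-- The jet space `(z¹, z², x, x_[10], x_[01], x_[20], x_[11], x_[02])`. -/
abbrev Jet2 (n : ℕ) :=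
  ℝ × ℝ × (Fin n → ℝ) × (Fin n → ℝ) × (Fin n → ℝ) × (Fin n → ℝ) × (Fin n → ℝ) × (Fin n → ℝ)

/-- Time derivative of a field `f(t,z¹,z²)`. -/
noncomputable def pt2 {E : Type*} [NormedAddCommGroup E] [NormedSpace ℝ E]
    (f : ℝ → ℝ → ℝ → E) : ℝ → ℝ → ℝ → E := fun t a b => deriv (fun s => f s a b) t

/-- Derivative `∂₁` with respect to `z¹`. -/
noncomputable def dz1 {E : Type*} [NormedAddCommGroup E] [NormedSpace ℝ E]
    (f : ℝ → ℝ → ℝ → E) : ℝ → ℝ → ℝ → E := fun t a b => deriv (fun s => f t s b) a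

/-- Derivative `∂₂` with respect to `z²`. -/
noncomputable def dz2 {E : Type*} [NormedAddCommGroup E] [NormedSpace ℝ E]
    (f : ℝ → ℝ → ℝ → E) : ℝ → ℝ → ℝ → E := fun t a b => deriv (fun s => f t a s) b

/-- Second-order jet of the field `x` at `(t, z¹, z²)`. -/
noncomputable def jet2 {n : ℕ} (x : ℝ → ℝ → ℝ → Fin n → ℝ) (t a b : ℝ) : Jet2 n :=
  (a, b, x t a b, dz1 x t a b, dz2 x t a b,
    dz1 (dz1 x) t a b, dz1 (dz2 x) t a b, dz2 (dz2 x) t a b)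

/-- Composed partial derivative `(∂H/∂x^α)[x]`. -/
noncomputable def sl00 {n : ℕ} (H : Jet2 n → ℝ) (x : ℝ → ℝ → ℝ → Fin n → ℝ)
    (α : Fin n) : ℝ → ℝ → ℝ → ℝ :=
  fun t a b => fderiv ℝ H (jet2 x t a b) (0, 0, Pi.single α 1, 0, 0, 0, 0, 0)

/-- Composed partial derivative `(∂H/∂x^α_[10])[x]`. -/
noncomputable def sl10 {n : ℕ} (H : Jet2 n → ℝ) (x : ℝ → ℝ → ℝ → Fin n → ℝ)
    (α : Fin n) : ℝ → ℝ → ℝ → ℝ :=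
  fun t a b => fderiv ℝ H (jet2 x t a b) (0, 0, 0, Pi.single α 1, 0, 0, 0, 0)

/-- Composed partial derivative `(∂H/∂x^α_[01])[x]`. -/
noncomputable def sl01 {n : ℕ} (H : Jet2 n → ℝ) (x : ℝ → ℝ → ℝ → Fin n → ℝ)
    (α : Fin n) : ℝ → ℝ → ℝ → ℝ :=
  fun t a b => fderiv ℝ H (jet2 x t a b) (0, 0, 0, 0, Pi.single α 1, 0, 0, 0)

/-- Composed partial derivative `(∂H/∂x^α_[20])[x]`. -/
noncomputable def sl20 {n : ℕ} (H : Jet2 n → ℝ) (x : ℝ → ℝ → ℝ → Fin n → ℝ)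
    (α : Fin n) : ℝ → ℝ → ℝ → ℝ :=
  fun t a b => fderiv ℝ H (jet2 x t a b) (0, 0, 0, 0, 0, Pi.single α 1, 0, 0)

/-- Composed partial derivative `(∂H/∂x^α_[11])[x]`. -/
noncomputable def sl11 {n : ℕ} (H : Jet2 n → ℝ) (x : ℝ → ℝ → ℝ → Fin n → ℝ)
    (α : Fin n) : ℝ → ℝ → ℝ → ℝ :=
  fun t a b => fderiv ℝ H (jet2 x t a b) (0, 0, 0, 0, 0, 0, Pi.single α 1, 0)

/-- Composed partial derivative `(∂H/∂x^α_[02])[x]`. -/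
noncomputable def sl02 {n : ℕ} (H : Jet2 n → ℝ) (x : ℝ → ℝ → ℝ → Fin n → ℝ)
    (α : Fin n) : ℝ → ℝ → ℝ → ℝ :=
  fun t a b => fderiv ℝ H (jet2 x t a b) (0, 0, 0, 0, 0, 0, 0, Pi.single α 1)

/-- Variational derivative `δ_α H[x]` on the two-dimensional spatial domain. -/
noncomputable def varDer2 {n : ℕ} (H : Jet2 n → ℝ) (x : ℝ → ℝ → ℝ → Fin n → ℝ)
    (α : Fin n) : ℝ → ℝ → ℝ → ℝ :=
  fun t a b =>
    sl00 H x α t a b - dz1 (sl10 H x α) t a b - dz2 (sl01 H x α) t a b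
      + dz1 (dz1 (sl20 H x α)) t a b + dz1 (dz2 (sl11 H x α)) t a b
      + dz2 (dz2 (sl02 H x α)) t a b

/-- Boundary contribution on edges with normal direction `z¹`:
`ẋ^α (H^[10]_α - ∂₁H^[20]_α - ∂₂H^[11]_α) + ẋ^α_[10] H^[20]_α` (summed over `α`). -/
noncomputable def edge1 {n : ℕ} (H : Jet2 n → ℝ) (x : ℝ → ℝ → ℝ → Fin n → ℝ) :
    ℝ → ℝ → ℝ → ℝ :=
  fun t a b =>
    ∑ α : Fin n,
      (pt2 x t a b α * (sl10 H x α t a b - dz1 (sl20 H x α) t a b - dz2 (sl11 H x α) t a b)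
        + pt2 (dz1 x) t a b α * sl20 H x α t a b)

/-- Boundary contribution on edges with normal direction `z²`:
`ẋ^α (H^[01]_α - ∂₂H^[02]_α - ∂₁H^[11]_α) + ẋ^α_[01] H^[02]_α` (summed over `α`). -/
noncomputable def edge2 {n : ℕ} (H : Jet2 n → ℝ) (x : ℝ → ℝ → ℝ → Fin n → ℝ) :
    ℝ → ℝ → ℝ → ℝ :=
  fun t a b =>
    ∑ α : Fin n,
      (pt2 x t a b α * (sl01 H x α t a b - dz2 (sl02 H x α) t a b - dz1 (sl11 H x α) t a b)
        + pt2 (dz2 x) t a b α * sl02 H x α t a b)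

/-- Corner contribution `ẋ^α H^[11]_α` (summed over `α`). -/
noncomputable def corner2 {n : ℕ} (H : Jet2 n → ℝ) (x : ℝ → ℝ → ℝ → Fin n → ℝ) :
    ℝ → ℝ → ℝ → ℝ :=
  fun t a b => ∑ α : Fin n, pt2 x t a b α * sl11 H x α t a b

/-!
Differentiating under the integral sign and applying the chain rule, the integrand of `d𝓗/dt`
becomes a linear expression in `ẋ` and its spatial derivatives up to order two. Integration by
parts, in the differential form of a Lagrange identity, moves all spatial derivatives off `ẋ`: the
integrand is `ẋ^α δ_α H[x]` plus `∂₁` and `∂₂` of the edge densities plus `∂₁∂₂` of the corner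
density. The mixed term has to be treated symmetrically,
`(∂₁∂₂u) p = u ∂₁∂₂p - ∂₁(u ∂₂p) - ∂₂(u ∂₁p) + ∂₁∂₂(u p)`,
and its last summand is the one that integrates to values at the four corners.
-/

/-- Joint `C^k` regularity of a field in `(t, z¹, z²)`. The order is a natural number, so that the
loss of one derivative reads `k + 1` to `k` and numerals unify with it. -/
def ContDiffField {E : Type*} [NormedAddCommGroup E] [NormedSpace ℝ E] (k : ℕ)
    (f : ℝ → ℝ → ℝ → E) : Prop :=
  ContDiff ℝ k (fun q : ℝ × ℝ × ℝ => f q.1 q.2.1 q.2.2)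

/-- Directional derivative of a field along `v` in `(t, z¹, z²)`-space; `pt2`, `dz1` and `dz2` are
the three coordinate cases as soon as the field is `C¹`. -/
noncomputable def dirDeriv {E : Type*} [NormedAddCommGroup E] [NormedSpace ℝ E] (v : ℝ × ℝ × ℝ)
    (f : ℝ → ℝ → ℝ → E) : ℝ → ℝ → ℝ → E :=
  fun t a b => fderiv ℝ (fun q : ℝ × ℝ × ℝ => f q.1 q.2.1 q.2.2) (t, a, b) v

namespace ContDiffField

section Calculus

variable {E : Type*} [NormedAddCommGroup E] [NormedSpace ℝ E] {f : ℝ → ℝ → ℝ → E} {j k : ℕ}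

lemma of_le (hf : ContDiffField k f) (hjk : j ≤ k) : ContDiffField j f :=
  ContDiff.of_le hf (by exact_mod_cast hjk)

lemma continuous_comp (hf : ContDiffField k f) {X : Type*} [TopologicalSpace X] {t a b : X → ℝ}
    (ht : Continuous t := by fun_prop) (ha : Continuous a := by fun_prop)
    (hb : Continuous b := by fun_prop) :
    Continuous fun y => f (t y) (a y) (b y) :=
  (ContDiff.continuous hf).comp (ht.prodMk (ha.prodMk hb))

lemma hasDerivAt_comp (hf : ContDiffField (k + 1) f) {c : ℝ → ℝ × ℝ × ℝ} {v : ℝ × ℝ × ℝ} {s : ℝ}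
    (hc : HasDerivAt c v s) :
    HasDerivAt (fun r => f (c r).1 (c r).2.1 (c r).2.2)
      (dirDeriv v f (c s).1 (c s).2.1 (c s).2.2) s := by
  have hf_diff := ContDiff.differentiable hf (by simp)
  exact (hf_diff (c s)).hasFDerivAt.comp_hasDerivAt s hc

lemma hasDerivAt_fst (hf : ContDiffField (k + 1) f) (t a b : ℝ) :
    HasDerivAt (fun s => f s a b) (dirDeriv (1, 0, 0) f t a b) t :=
  hf.hasDerivAt_comp (c := fun s => (s, a, b))
    ((hasDerivAt_id t).prodMk ((hasDerivAt_const t a).prodMk (hasDerivAt_const t b)))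

lemma hasDerivAt_snd (hf : ContDiffField (k + 1) f) (t a b : ℝ) :
    HasDerivAt (fun s => f t s b) (dirDeriv (0, 1, 0) f t a b) a :=
  hf.hasDerivAt_comp (c := fun s => (t, s, b))
    ((hasDerivAt_const a t).prodMk ((hasDerivAt_id a).prodMk (hasDerivAt_const a b)))

lemma hasDerivAt_trd (hf : ContDiffField (k + 1) f) (t a b : ℝ) :
    HasDerivAt (fun s => f t a s) (dirDeriv (0, 0, 1) f t a b) b :=
  hf.hasDerivAt_comp (c := fun s => (t, a, s))
    ((hasDerivAt_const b t).prodMk ((hasDerivAt_const b a).prodMk (hasDerivAt_id b)))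

lemma pt2_eq_dirDeriv (hf : ContDiffField (k + 1) f) : pt2 f = dirDeriv (1, 0, 0) f := by
  ext1 t; ext1 a; ext1 b
  exact (hf.hasDerivAt_fst t a b).deriv

lemma dz1_eq_dirDeriv (hf : ContDiffField (k + 1) f) : dz1 f = dirDeriv (0, 1, 0) f := by
  ext1 t; ext1 a; ext1 b
  exact (hf.hasDerivAt_snd t a b).deriv

lemma dz2_eq_dirDeriv (hf : ContDiffField (k + 1) f) : dz2 f = dirDeriv (0, 0, 1) f := by
  ext1 t; ext1 a; ext1 b
  exact (hf.hasDerivAt_trd t a b).deriv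

lemma hasDerivAt_pt2 (hf : ContDiffField (k + 1) f) (t a b : ℝ) :
    HasDerivAt (fun s => f s a b) (pt2 f t a b) t :=
  (hf.hasDerivAt_fst t a b).differentiableAt.hasDerivAt

lemma hasDerivAt_dz1 (hf : ContDiffField (k + 1) f) (t a b : ℝ) :
    HasDerivAt (fun s => f t s b) (dz1 f t a b) a :=
  (hf.hasDerivAt_snd t a b).differentiableAt.hasDerivAt

lemma hasDerivAt_dz2 (hf : ContDiffField (k + 1) f) (t a b : ℝ) :
    HasDerivAt (fun s => f t a s) (dz2 f t a b) b :=
  (hf.hasDerivAt_trd t a b).differentiableAt.hasDerivAt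

protected lemma dirDeriv (hf : ContDiffField (k + 1) f) (v : ℝ × ℝ × ℝ) :
    ContDiffField k (dirDeriv v f) :=
  (ContDiff.fderiv_right hf (by norm_cast)).clm_apply contDiff_const

protected lemma pt2 (hf : ContDiffField (k + 1) f) : ContDiffField k (pt2 f) :=
  hf.pt2_eq_dirDeriv ▸ hf.dirDeriv _

protected lemma dz1 (hf : ContDiffField (k + 1) f) : ContDiffField k (dz1 f) :=
  hf.dz1_eq_dirDeriv ▸ hf.dirDeriv _

protected lemma dz2 (hf : ContDiffField (k + 1) f) : ContDiffField k (dz2 f) :=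
  hf.dz2_eq_dirDeriv ▸ hf.dirDeriv _

lemma dirDeriv_dirDeriv (hf : ContDiffField (k + 2) f) (v w : ℝ × ℝ × ℝ) (t a b : ℝ) :
    dirDeriv v (dirDeriv w f) t a b =
      fderiv ℝ (fderiv ℝ fun q : ℝ × ℝ × ℝ => f q.1 q.2.1 q.2.2) (t, a, b) v w := by
  have hdf : ContDiff ℝ (k + 1 : ℕ) (fderiv ℝ fun q : ℝ × ℝ × ℝ => f q.1 q.2.1 q.2.2) :=
    ContDiff.fderiv_right hf (by norm_cast)
  have hD := (hdf.differentiable (by simp) (t, a, b)).hasFDerivAt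
  simpa [dirDeriv] using congr($((hD.clm_apply (hasFDerivAt_const w (t, a, b))).fderiv) v)

lemma dirDeriv_comm (hf : ContDiffField (k + 2) f) (v w : ℝ × ℝ × ℝ) :
    dirDeriv v (dirDeriv w f) = dirDeriv w (dirDeriv v f) := by
  ext1 t; ext1 a; ext1 b
  rw [hf.dirDeriv_dirDeriv, hf.dirDeriv_dirDeriv]
  refine (ContDiff.contDiffAt hf).isSymmSndFDerivAt ?_ v w
  rw [minSmoothness_of_isRCLikeNormedField]
  exact_mod_cast Nat.le_add_left 2 k

lemma pt2_dz1_comm (hf : ContDiffField (k + 2) f) : pt2 (dz1 f) = dz1 (pt2 f) := by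
  rw [hf.dz1.pt2_eq_dirDeriv, hf.pt2.dz1_eq_dirDeriv, hf.dz1_eq_dirDeriv, hf.pt2_eq_dirDeriv,
    hf.dirDeriv_comm]

lemma pt2_dz2_comm (hf : ContDiffField (k + 2) f) : pt2 (dz2 f) = dz2 (pt2 f) := by
  rw [hf.dz2.pt2_eq_dirDeriv, hf.pt2.dz2_eq_dirDeriv, hf.dz2_eq_dirDeriv, hf.pt2_eq_dirDeriv,
    hf.dirDeriv_comm]

lemma dz1_dz2_comm (hf : ContDiffField (k + 2) f) : dz1 (dz2 f) = dz2 (dz1 f) := by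
  rw [hf.dz2.dz1_eq_dirDeriv, hf.dz1.dz2_eq_dirDeriv, hf.dz2_eq_dirDeriv, hf.dz1_eq_dirDeriv,
    hf.dirDeriv_comm]

end Calculus

section Algebra

variable {f g : ℝ → ℝ → ℝ → ℝ} {j k : ℕ}

protected lemma add (hf : ContDiffField k f) (hg : ContDiffField k g) : ContDiffField k (f + g) :=
  ContDiff.add hf hg

protected lemma sub (hf : ContDiffField k f) (hg : ContDiffField k g) : ContDiffField k (f - g) :=
  ContDiff.sub hf hg

protected lemma mul (hf : ContDiffField k f) (hg : ContDiffField k g) : ContDiffField k (f * g) :=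
  ContDiff.mul hf hg

protected lemma sum {ι : Type*} {s : Finset ι} {F : ι → ℝ → ℝ → ℝ → ℝ}
    (hF : ∀ i ∈ s, ContDiffField k (F i)) : ContDiffField k (∑ i ∈ s, F i) := by
  simpa only [ContDiffField, Finset.sum_apply] using ContDiff.sum hF

lemma dz1_add (hf : ContDiffField (j + 1) f) (hg : ContDiffField (k + 1) g) :
    dz1 (f + g) = dz1 f + dz1 g := by
  ext t a b
  exact ((hf.hasDerivAt_dz1 t a b).add (hg.hasDerivAt_dz1 t a b)).deriv

lemma dz2_add (hf : ContDiffField (j + 1) f) (hg : ContDiffField (k + 1) g) :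
    dz2 (f + g) = dz2 f + dz2 g := by
  ext t a b
  exact ((hf.hasDerivAt_dz2 t a b).add (hg.hasDerivAt_dz2 t a b)).deriv

lemma dz1_sub (hf : ContDiffField (j + 1) f) (hg : ContDiffField (k + 1) g) :
    dz1 (f - g) = dz1 f - dz1 g := by
  ext t a b
  exact ((hf.hasDerivAt_dz1 t a b).sub (hg.hasDerivAt_dz1 t a b)).deriv

lemma dz2_sub (hf : ContDiffField (j + 1) f) (hg : ContDiffField (k + 1) g) :
    dz2 (f - g) = dz2 f - dz2 g := by
  ext t a b
  exact ((hf.hasDerivAt_dz2 t a b).sub (hg.hasDerivAt_dz2 t a b)).deriv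

lemma dz1_mul (hf : ContDiffField (j + 1) f) (hg : ContDiffField (k + 1) g) :
    dz1 (f * g) = dz1 f * g + f * dz1 g := by
  ext t a b
  exact ((hf.hasDerivAt_dz1 t a b).mul (hg.hasDerivAt_dz1 t a b)).deriv

lemma dz2_mul (hf : ContDiffField (j + 1) f) (hg : ContDiffField (k + 1) g) :
    dz2 (f * g) = dz2 f * g + f * dz2 g := by
  ext t a b
  exact ((hf.hasDerivAt_dz2 t a b).mul (hg.hasDerivAt_dz2 t a b)).deriv

lemma dz1_sum {ι : Type*} {s : Finset ι} {F : ι → ℝ → ℝ → ℝ → ℝ}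
    (hF : ∀ i ∈ s, ContDiffField (k + 1) (F i)) : dz1 (∑ i ∈ s, F i) = ∑ i ∈ s, dz1 (F i) := by
  ext t a b
  simpa only [dz1, Finset.sum_apply] using
    (HasDerivAt.fun_sum fun i hi => (hF i hi).hasDerivAt_dz1 t a b).deriv

lemma dz2_sum {ι : Type*} {s : Finset ι} {F : ι → ℝ → ℝ → ℝ → ℝ}
    (hF : ∀ i ∈ s, ContDiffField (k + 1) (F i)) : dz2 (∑ i ∈ s, F i) = ∑ i ∈ s, dz2 (F i) := by
  ext t a b
  simpa only [dz2, Finset.sum_apply] using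
    (HasDerivAt.fun_sum fun i hi => (hF i hi).hasDerivAt_dz2 t a b).deriv

end Algebra

end ContDiffField

section Lagrange

/-- Flux density through the edges with normal direction `z¹` that arises when the derivatives
`∂₁`, `∂₁²`, `∂₁∂₂` of `u`, weighted by `p₁₀`, `p₂₀`, `p₁₁`, are integrated by parts. The other
half of the mixed term goes into `edgeFlux2`. -/
noncomputable def edgeFlux1 (u p₁₀ p₂₀ p₁₁ : ℝ → ℝ → ℝ → ℝ) : ℝ → ℝ → ℝ → ℝ :=
  u * (p₁₀ - dz1 p₂₀ - dz2 p₁₁) + dz1 u * p₂₀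

/-- Flux density through the edges with normal direction `z²`, the mirror image of `edgeFlux1`. -/
noncomputable def edgeFlux2 (u p₀₁ p₀₂ p₁₁ : ℝ → ℝ → ℝ → ℝ) : ℝ → ℝ → ℝ → ℝ :=
  u * (p₀₁ - dz2 p₀₂ - dz1 p₁₁) + dz2 u * p₀₂

variable {k : ℕ} {u p₁₀ p₀₁ p₂₀ p₁₁ p₀₂ : ℝ → ℝ → ℝ → ℝ}

protected lemma ContDiffField.edgeFlux1 (hu : ContDiffField (k + 1) u) (h₁₀ : ContDiffField k p₁₀)
    (h₂₀ : ContDiffField (k + 1) p₂₀) (h₁₁ : ContDiffField (k + 1) p₁₁) :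
    ContDiffField k (edgeFlux1 u p₁₀ p₂₀ p₁₁) :=
  ((hu.of_le k.le_succ).mul ((h₁₀.sub h₂₀.dz1).sub h₁₁.dz2)).add
    (hu.dz1.mul (h₂₀.of_le k.le_succ))

protected lemma ContDiffField.edgeFlux2 (hu : ContDiffField (k + 1) u) (h₀₁ : ContDiffField k p₀₁)
    (h₀₂ : ContDiffField (k + 1) p₀₂) (h₁₁ : ContDiffField (k + 1) p₁₁) :
    ContDiffField k (edgeFlux2 u p₀₁ p₀₂ p₁₁) :=
  ((hu.of_le k.le_succ).mul ((h₀₁.sub h₀₂.dz2).sub h₁₁.dz1)).add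
    (hu.dz2.mul (h₀₂.of_le k.le_succ))

lemma dz1_edgeFlux1 (hu : ContDiffField 2 u) (h₁₀ : ContDiffField 1 p₁₀)
    (h₂₀ : ContDiffField 2 p₂₀) (h₁₁ : ContDiffField 2 p₁₁) :
    dz1 (edgeFlux1 u p₁₀ p₂₀ p₁₁) =
      dz1 u * (p₁₀ - dz2 p₁₁) + u * (dz1 p₁₀ - dz1 (dz1 p₂₀) - dz1 (dz2 p₁₁))
        + dz1 (dz1 u) * p₂₀ := by
  have hc := (h₁₀.sub h₂₀.dz1).sub h₁₁.dz2
  have hu' := hu.of_le one_le_two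
  have h₂₀' := h₂₀.of_le one_le_two
  rw [edgeFlux1, (hu'.mul hc).dz1_add (hu.dz1.mul h₂₀'), hu.dz1_mul hc, hu.dz1.dz1_mul h₂₀,
    (h₁₀.sub h₂₀.dz1).dz1_sub h₁₁.dz2, h₁₀.dz1_sub h₂₀.dz1]
  ring

lemma dz2_edgeFlux2 (hu : ContDiffField 2 u) (h₀₁ : ContDiffField 1 p₀₁)
    (h₀₂ : ContDiffField 2 p₀₂) (h₁₁ : ContDiffField 2 p₁₁) :
    dz2 (edgeFlux2 u p₀₁ p₀₂ p₁₁) =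
      dz2 u * (p₀₁ - dz1 p₁₁) + u * (dz2 p₀₁ - dz2 (dz2 p₀₂) - dz1 (dz2 p₁₁))
        + dz2 (dz2 u) * p₀₂ := by
  have hc := (h₀₁.sub h₀₂.dz2).sub h₁₁.dz1
  have hu' := hu.of_le one_le_two
  have h₀₂' := h₀₂.of_le one_le_two
  rw [edgeFlux2, (hu'.mul hc).dz2_add (hu.dz2.mul h₀₂'), hu.dz2_mul hc, hu.dz2.dz2_mul h₀₂,
    (h₀₁.sub h₀₂.dz2).dz2_sub h₁₁.dz1, h₀₁.dz2_sub h₀₂.dz2, h₁₁.dz1_dz2_comm]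
  ring

lemma dz1_dz2_mul (hu : ContDiffField 2 u) (h₁₁ : ContDiffField 2 p₁₁) :
    dz1 (dz2 (u * p₁₁)) =
      dz1 (dz2 u) * p₁₁ + dz2 u * dz1 p₁₁ + dz1 u * dz2 p₁₁ + u * dz1 (dz2 p₁₁) := by
  have hu' := hu.of_le one_le_two
  have h₁₁' := h₁₁.of_le one_le_two
  rw [hu.dz2_mul h₁₁, (hu.dz2.mul h₁₁').dz1_add (hu'.mul h₁₁.dz2), hu.dz2.dz1_mul h₁₁,
    hu.dz1_mul h₁₁.dz2]
  ring

theorem lagrange_identity (p₀₀ : ℝ → ℝ → ℝ → ℝ) (hu : ContDiffField 2 u)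
    (h₁₀ : ContDiffField 1 p₁₀) (h₀₁ : ContDiffField 1 p₀₁) (h₂₀ : ContDiffField 2 p₂₀)
    (h₁₁ : ContDiffField 2 p₁₁) (h₀₂ : ContDiffField 2 p₀₂) :
    u * p₀₀ + dz1 u * p₁₀ + dz2 u * p₀₁ + dz1 (dz1 u) * p₂₀ + dz1 (dz2 u) * p₁₁
        + dz2 (dz2 u) * p₀₂ =
      u * (p₀₀ - dz1 p₁₀ - dz2 p₀₁ + dz1 (dz1 p₂₀) + dz1 (dz2 p₁₁) + dz2 (dz2 p₀₂))
        + dz1 (edgeFlux1 u p₁₀ p₂₀ p₁₁) + dz2 (edgeFlux2 u p₀₁ p₀₂ p₁₁)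
        + dz1 (dz2 (u * p₁₁)) := by
  rw [dz1_edgeFlux1 hu h₁₀ h₂₀ h₁₁, dz2_edgeFlux2 hu h₀₁ h₀₂ h₁₁, dz1_dz2_mul hu h₁₁]
  ring

end Lagrange

section RectangleIntegrals

variable {E : Type*} [NormedAddCommGroup E] [NormedSpace ℝ E]

lemma hasDerivAt_intervalIntegral_of_continuous {g g' : ℝ → ℝ → E} (a b : ℝ)
    (hg : ∀ t, Continuous (g t)) (hg' : Continuous g'.uncurry)
    (hderiv : ∀ t z, HasDerivAt (fun s => g s z) (g' t z) t) (t : ℝ) :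
    HasDerivAt (fun s => ∫ z in a..b, g s z) (∫ z in a..b, g' t z) t := by
  obtain ⟨C, hC⟩ := ((isCompact_closedBall t 1).prod (isCompact_uIcc (a := a) (b := b))
    ).exists_bound_of_continuousOn hg'.continuousOn
  exact (intervalIntegral.hasDerivAt_integral_of_dominated_loc_of_deriv_le (bound := fun _ => C)
    (Metric.closedBall_mem_nhds t one_pos) (.of_forall fun s => (hg s).aestronglyMeasurable)
    ((hg t).intervalIntegrable _ _) (hg'.uncurry_left t).aestronglyMeasurable
    (.of_forall fun z hz s hs => hC (s, z) ⟨hs, Set.uIoc_subset_uIcc hz⟩)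
    intervalIntegrable_const (.of_forall fun z _ s _ => hderiv s z)).2

namespace ContDiffField

variable {f g : ℝ → ℝ → ℝ → E} {j k : ℕ}

lemma continuous_integral (hf : ContDiffField k f) (a₂ b₂ : ℝ) :
    Continuous (fun t a => ∫ b in a₂..b₂, f t a b).uncurry := by
  have hcont : Continuous (fun (p : ℝ × ℝ) b => f p.1 p.2 b).uncurry := hf.continuous_comp
  exact intervalIntegral.continuous_parametric_intervalIntegral_of_continuous' hcont _ _

lemma hasDerivAt_integral_integral (hf : ContDiffField (k + 1) f) (a₁ b₁ a₂ b₂ t : ℝ) :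
    HasDerivAt (fun s => ∫ a in a₁..b₁, ∫ b in a₂..b₂, f s a b)
      (∫ a in a₁..b₁, ∫ b in a₂..b₂, pt2 f t a b) t := by
  refine hasDerivAt_intervalIntegral_of_continuous a₁ b₁
    (hf.continuous_integral a₂ b₂).uncurry_left
    (hf.pt2.continuous_integral a₂ b₂) (fun s a => ?_) t
  exact hasDerivAt_intervalIntegral_of_continuous a₂ b₂
    (fun s => hf.continuous_comp) hf.pt2.continuous_comp (fun s b => hf.hasDerivAt_pt2 s a b) s

lemma integral_integral_add (hf : ContDiffField j f) (hg : ContDiffField k g)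
    (a₁ b₁ a₂ b₂ t : ℝ) :
    ∫ a in a₁..b₁, ∫ b in a₂..b₂, (f + g) t a b =
      (∫ a in a₁..b₁, ∫ b in a₂..b₂, f t a b) + ∫ a in a₁..b₁, ∫ b in a₂..b₂, g t a b := by
  have hf_inner (a : ℝ) : Continuous fun b => f t a b := hf.continuous_comp
  have hg_inner (a : ℝ) : Continuous fun b => g t a b := hg.continuous_comp
  have hf_outer := (hf.continuous_integral a₂ b₂).uncurry_left t
  have hg_outer := (hg.continuous_integral a₂ b₂).uncurry_left t
  rw [← intervalIntegral.integral_add (hf_outer.intervalIntegrable _ _)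
    (hg_outer.intervalIntegrable _ _)]
  refine intervalIntegral.integral_congr fun a _ => ?_
  exact intervalIntegral.integral_add ((hf_inner a).intervalIntegrable _ _)
    ((hg_inner a).intervalIntegrable _ _)

variable [CompleteSpace E]

lemma integral_dz1 (hf : ContDiffField (k + 1) f) (t a₁ b₁ b : ℝ) :
    ∫ a in a₁..b₁, dz1 f t a b = f t b₁ b - f t a₁ b :=
  have hcont : Continuous fun a => dz1 f t a b :=
    hf.dz1.continuous_comp
  intervalIntegral.integral_eq_sub_of_hasDerivAt (fun a _ => hf.hasDerivAt_dz1 t a b)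
    (hcont.intervalIntegrable _ _)

lemma integral_dz2 (hf : ContDiffField (k + 1) f) (t a a₂ b₂ : ℝ) :
    ∫ b in a₂..b₂, dz2 f t a b = f t a b₂ - f t a a₂ :=
  have hcont : Continuous fun b => dz2 f t a b :=
    hf.dz2.continuous_comp
  intervalIntegral.integral_eq_sub_of_hasDerivAt (fun b _ => hf.hasDerivAt_dz2 t a b)
    (hcont.intervalIntegrable _ _)

lemma integral_integral_dz1 (hf : ContDiffField (k + 1) f) (a₁ b₁ a₂ b₂ t : ℝ) :
    ∫ a in a₁..b₁, ∫ b in a₂..b₂, dz1 f t a b = ∫ b in a₂..b₂, (f t b₁ b - f t a₁ b) := by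
  have hcont : Continuous (dz1 f t).uncurry :=
    hf.dz1.continuous_comp
  have hint : IntegrableOn (dz1 f t).uncurry (Set.uIoc a₁ b₁ ×ˢ Set.uIoc a₂ b₂) :=
    (hcont.continuousOn.integrableOn_compact (isCompact_uIcc.prod isCompact_uIcc)).mono_set
      (Set.prod_mono Set.uIoc_subset_uIcc Set.uIoc_subset_uIcc)
  simp only [intervalIntegral_intervalIntegral_swap hint, hf.integral_dz1]

lemma integral_integral_dz2 (hf : ContDiffField (k + 1) f) (a₁ b₁ a₂ b₂ t : ℝ) :
    ∫ a in a₁..b₁, ∫ b in a₂..b₂, dz2 f t a b = ∫ a in a₁..b₁, (f t a b₂ - f t a a₂) := by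
  simp only [hf.integral_dz2]

lemma integral_integral_dz1_dz2 (hf : ContDiffField (k + 2) f) (a₁ b₁ a₂ b₂ t : ℝ) :
    ∫ a in a₁..b₁, ∫ b in a₂..b₂, dz1 (dz2 f) t a b =
      (f t b₁ b₂ - f t a₁ b₂) - (f t b₁ a₂ - f t a₁ a₂) := by
  rw [hf.dz2.integral_integral_dz1, intervalIntegral.integral_sub, hf.integral_dz2, hf.integral_dz2,
    sub_sub_sub_comm]
  all_goals exact hf.dz2.continuous_comp.intervalIntegrable _ _

end ContDiffField

end RectangleIntegrals

section Jets

/-- The component `ẋ^α` of the time derivative of a field `x`. -/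
noncomputable def velocity {n : ℕ} (x : ℝ → ℝ → ℝ → Fin n → ℝ) (α : Fin n) : ℝ → ℝ → ℝ → ℝ :=
  fun t a b => pt2 x t a b α

variable {n k : ℕ} {x : ℝ → ℝ → ℝ → Fin n → ℝ} {H : Jet2 n → ℝ}

namespace ContDiffField

protected lemma velocity (hx : ContDiffField (k + 1) x) (α : Fin n) :
    ContDiffField k (velocity x α) :=
  contDiff_pi.1 hx.pt2 α

lemma dz1_apply (hx : ContDiffField (k + 1) x) (α : Fin n) :
    dz1 (fun t a b => x t a b α) = fun t a b => dz1 x t a b α := by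
  ext t a b
  exact (hasDerivAt_pi.1 (hx.hasDerivAt_dz1 t a b) α).deriv

lemma dz2_apply (hx : ContDiffField (k + 1) x) (α : Fin n) :
    dz2 (fun t a b => x t a b α) = fun t a b => dz2 x t a b α := by
  ext t a b
  exact (hasDerivAt_pi.1 (hx.hasDerivAt_dz2 t a b) α).deriv

lemma velocity_dz1 (hx : ContDiffField (k + 2) x) (α : Fin n) :
    velocity (dz1 x) α = dz1 (velocity x α) := by
  unfold velocity
  rw [hx.pt2.dz1_apply, hx.pt2_dz1_comm]

lemma velocity_dz2 (hx : ContDiffField (k + 2) x) (α : Fin n) :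
    velocity (dz2 x) α = dz2 (velocity x α) := by
  unfold velocity
  rw [hx.pt2.dz2_apply, hx.pt2_dz2_comm]

protected lemma jet2 (hx : ContDiffField (k + 2) x) : ContDiffField k (jet2 x) :=
  contDiff_snd.fst.prodMk <| contDiff_snd.snd.prodMk <|
    ContDiff.prodMk (hx.of_le (Nat.le_add_right k 2)) <|
    ContDiff.prodMk (hx.dz1.of_le k.le_succ) <| ContDiff.prodMk (hx.dz2.of_le k.le_succ) <|
    ContDiff.prodMk hx.dz1.dz1 <| ContDiff.prodMk hx.dz2.dz1 hx.dz2.dz2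

lemma comp_jet2 (hH : ContDiff ℝ k H) (hx : ContDiffField (k + 2) x) :
    ContDiffField k fun t a b => H (jet2 x t a b) :=
  hH.comp hx.jet2

lemma fderiv_jet2 (hH : ContDiff ℝ (k + 1 : ℕ) H) (hx : ContDiffField (k + 2) x) (v : Jet2 n) :
    ContDiffField k fun t a b => fderiv ℝ H (jet2 x t a b) v :=
  ((hH.fderiv_right (by norm_cast)).comp hx.jet2).clm_apply contDiff_const

end ContDiffField

lemma pt2_jet2 (hx : ContDiffField 3 x) (t a b : ℝ) :
    pt2 (jet2 x) t a b = (0, 0, pt2 x t a b, pt2 (dz1 x) t a b, pt2 (dz2 x) t a b,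
      pt2 (dz1 (dz1 x)) t a b, pt2 (dz1 (dz2 x)) t a b, pt2 (dz2 (dz2 x)) t a b) :=
  ((hasDerivAt_const t a).prodMk <| (hasDerivAt_const t b).prodMk <|
    (hx.hasDerivAt_pt2 t a b).prodMk <| (hx.dz1.hasDerivAt_pt2 t a b).prodMk <|
    (hx.dz2.hasDerivAt_pt2 t a b).prodMk <| (hx.dz1.dz1.hasDerivAt_pt2 t a b).prodMk <|
    (hx.dz2.dz1.hasDerivAt_pt2 t a b).prodMk (hx.dz2.dz2.hasDerivAt_pt2 t a b)).deriv

lemma map_jet2_eq_sum (L : Jet2 n →ₗ[ℝ] ℝ) (v₀₀ v₁₀ v₀₁ v₂₀ v₁₁ v₀₂ : Fin n → ℝ) :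
    L (0, 0, v₀₀, v₁₀, v₀₁, v₂₀, v₁₁, v₀₂) = ∑ α,
      (v₀₀ α * L (0, 0, Pi.single α 1, 0, 0, 0, 0, 0)
        + v₁₀ α * L (0, 0, 0, Pi.single α 1, 0, 0, 0, 0)
        + v₀₁ α * L (0, 0, 0, 0, Pi.single α 1, 0, 0, 0)
        + v₂₀ α * L (0, 0, 0, 0, 0, Pi.single α 1, 0, 0)
        + v₁₁ α * L (0, 0, 0, 0, 0, 0, Pi.single α 1, 0)
        + v₀₂ α * L (0, 0, 0, 0, 0, 0, 0, Pi.single α 1)) := by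
  simp only [← smul_eq_mul, ← map_smul, ← map_add, ← map_sum]
  congr 1
  simp [Prod.ext_iff, Prod.fst_sum, Prod.snd_sum, funext_iff, Pi.single_apply]

lemma pt2_comp_jet2 (hH : ContDiff ℝ 1 H) (hx : ContDiffField 4 x) :
    pt2 (fun t a b => H (jet2 x t a b)) =
      ∑ α, (velocity x α * sl00 H x α + dz1 (velocity x α) * sl10 H x α
        + dz2 (velocity x α) * sl01 H x α + dz1 (dz1 (velocity x α)) * sl20 H x α
        + dz1 (dz2 (velocity x α)) * sl11 H x α + dz2 (dz2 (velocity x α)) * sl02 H x α) := by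
  ext t a b
  have hchain := ((hH.differentiable one_ne_zero (jet2 x t a b)).hasFDerivAt.comp_hasDerivAt t
    (hx.jet2.hasDerivAt_pt2 t a b)).deriv
  rw [pt2_jet2 (hx.of_le (by decide))] at hchain
  simp only [← hx.velocity_dz1, ← hx.velocity_dz2, ← hx.dz1.velocity_dz1, ← hx.dz2.velocity_dz1,
    ← hx.dz2.velocity_dz2, Finset.sum_apply]
  exact hchain.trans (map_jet2_eq_sum (fderiv ℝ H (jet2 x t a b)).toLinearMap ..)

lemma edge1_eq_sum (hx : ContDiffField 2 x) :
    edge1 H x = ∑ α, edgeFlux1 (velocity x α) (sl10 H x α) (sl20 H x α) (sl11 H x α) := by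
  simp only [edgeFlux1, ← hx.velocity_dz1]
  ext t a b
  simp only [Finset.sum_apply]
  rfl

lemma edge2_eq_sum (hx : ContDiffField 2 x) :
    edge2 H x = ∑ α, edgeFlux2 (velocity x α) (sl01 H x α) (sl02 H x α) (sl11 H x α) := by
  simp only [edgeFlux2, ← hx.velocity_dz2]
  ext t a b
  simp only [Finset.sum_apply]
  rfl

lemma corner2_eq_sum : corner2 H x = ∑ α, velocity x α * sl11 H x α := by
  ext t a b
  simp only [Finset.sum_apply]
  rfl

lemma ContDiffField.edgeFlux1_velocity (hH : ContDiff ℝ 3 H) (hx : ContDiffField 4 x) (α : Fin n) :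
    ContDiffField 1 (edgeFlux1 (velocity x α) (sl10 H x α) (sl20 H x α) (sl11 H x α)) :=
  .edgeFlux1 (hx.velocity α |>.of_le (by decide)) (fderiv_jet2 hH hx _ |>.of_le one_le_two)
    (fderiv_jet2 hH hx _) (fderiv_jet2 hH hx _)

lemma ContDiffField.edgeFlux2_velocity (hH : ContDiff ℝ 3 H) (hx : ContDiffField 4 x) (α : Fin n) :
    ContDiffField 1 (edgeFlux2 (velocity x α) (sl01 H x α) (sl02 H x α) (sl11 H x α)) :=
  .edgeFlux2 (hx.velocity α |>.of_le (by decide)) (fderiv_jet2 hH hx _ |>.of_le one_le_two)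
    (fderiv_jet2 hH hx _) (fderiv_jet2 hH hx _)

lemma ContDiffField.velocity_mul_sl11 (hH : ContDiff ℝ 3 H) (hx : ContDiffField 4 x) (α : Fin n) :
    ContDiffField 2 (velocity x α * sl11 H x α) :=
  (hx.velocity α |>.of_le (by decide)).mul (fderiv_jet2 hH hx _)

lemma ContDiffField.velocity_mul_varDer2 (hH : ContDiff ℝ 3 H) (hx : ContDiffField 4 x)
    (α : Fin n) : ContDiffField 0 (velocity x α * varDer2 H x α) :=
  have hsl (v : Jet2 n) : ContDiffField 2 fun t a b => fderiv ℝ H (jet2 x t a b) v :=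
    fderiv_jet2 hH hx v
  (hx.velocity α |>.of_le (by decide)).mul <|
    (((((hsl _).of_le (by decide)).sub ((hsl _).dz1.of_le (by decide))).sub
      ((hsl _).dz2.of_le (by decide))).add (hsl _).dz1.dz1).add (hsl _).dz2.dz1 |>.add
      (hsl _).dz2.dz2

protected lemma ContDiffField.edge1 (hH : ContDiff ℝ 3 H) (hx : ContDiffField 4 x) :
    ContDiffField 1 (edge1 H x) :=
  edge1_eq_sum (hx.of_le (by decide)) ▸ .sum fun α _ => .edgeFlux1_velocity hH hx α

protected lemma ContDiffField.edge2 (hH : ContDiff ℝ 3 H) (hx : ContDiffField 4 x) :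
    ContDiffField 1 (edge2 H x) :=
  edge2_eq_sum (hx.of_le (by decide)) ▸ .sum fun α _ => .edgeFlux2_velocity hH hx α

protected lemma ContDiffField.corner2 (hH : ContDiff ℝ 3 H) (hx : ContDiffField 4 x) :
    ContDiffField 2 (corner2 H x) :=
  corner2_eq_sum ▸ .sum fun α _ => .velocity_mul_sl11 hH hx α

theorem pt2_comp_jet2_eq_varDer2_add_div (hH : ContDiff ℝ 3 H) (hx : ContDiffField 4 x) :
    pt2 (fun t a b => H (jet2 x t a b)) =
      ∑ α, velocity x α * varDer2 H x α + dz1 (edge1 H x) + dz2 (edge2 H x)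
        + dz1 (dz2 (corner2 H x)) := by
  have hsl (v : Jet2 n) : ContDiffField 2 fun t a b => fderiv ℝ H (jet2 x t a b) v :=
    .fderiv_jet2 hH hx v
  have hvel (α) : ContDiffField 2 (velocity x α) := (hx.velocity α).of_le (by decide)
  have hcorner (α) (_ : α ∈ Finset.univ) := ContDiffField.velocity_mul_sl11 hH hx α
  rw [edge1_eq_sum (hx.of_le (by decide)), edge2_eq_sum (hx.of_le (by decide)), corner2_eq_sum,
    ContDiffField.dz1_sum fun α _ => .edgeFlux1_velocity hH hx α,
    ContDiffField.dz2_sum fun α _ => .edgeFlux2_velocity hH hx α, ContDiffField.dz2_sum hcorner,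
    ContDiffField.dz1_sum fun α hα => (hcorner α hα).dz2,
    pt2_comp_jet2 (hH.of_le (by norm_num)) hx]
  simp only [← Finset.sum_add_distrib]
  exact Finset.sum_congr rfl fun α _ => lagrange_identity (sl00 H x α) (hvel α)
    ((hsl _).of_le one_le_two) ((hsl _).of_le one_le_two) (hsl _) (hsl _) (hsl _)

end Jets

theorem statement1_general {n : ℕ} (a₁ b₁ a₂ b₂ : ℝ) (H : Jet2 n → ℝ) (hH : ContDiff ℝ 3 H)
    (x : ℝ → ℝ → ℝ → Fin n → ℝ)
    (hx : ContDiff ℝ 4 (fun q : ℝ × ℝ × ℝ => x q.1 q.2.1 q.2.2)) (t : ℝ) :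
    HasDerivAt (fun τ => ∫ a in a₁..b₁, ∫ b in a₂..b₂, H (jet2 x τ a b))
      ((∫ a in a₁..b₁, ∫ b in a₂..b₂, ∑ α : Fin n, pt2 x t a b α * varDer2 H x α t a b)
        + (∫ b in a₂..b₂, (edge1 H x t b₁ b - edge1 H x t a₁ b))
        + (∫ a in a₁..b₁, (edge2 H x t a b₂ - edge2 H x t a a₂))
        + ((corner2 H x t b₁ b₂ - corner2 H x t a₁ b₂)
            - (corner2 H x t b₁ a₂ - corner2 H x t a₁ a₂))) t := by
  have hx : ContDiffField 4 x := hx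
  have hbulk : ContDiffField 0 (∑ α, velocity x α * varDer2 H x α) :=
    .sum fun α _ => .velocity_mul_varDer2 hH hx α
  have hedge1 := ContDiffField.edge1 hH hx
  have hedge2 := ContDiffField.edge2 hH hx
  have hcorner := ContDiffField.corner2 hH hx
  have hHx : ContDiffField 1 fun t a b => H (jet2 x t a b) :=
    .comp_jet2 (hH.of_le (by norm_num)) (hx.of_le (by decide))
  have hderiv := hHx.hasDerivAt_integral_integral a₁ b₁ a₂ b₂ t
  rw [pt2_comp_jet2_eq_varDer2_add_div hH hx,
    ((hbulk.add hedge1.dz1).add hedge2.dz2).integral_integral_add hcorner.dz2.dz1,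
    (hbulk.add hedge1.dz1).integral_integral_add hedge2.dz2,
    hbulk.integral_integral_add hedge1.dz1, hedge1.integral_integral_dz1,
    hedge2.integral_integral_dz2, hcorner.integral_integral_dz1_dz2] at hderiv
  simp only [Finset.sum_apply] at hderiv
  exact hderiv

/-- decomposition of the formal change of a second-order Hamiltonian
functional on the rectangle `B = [0,L₁] × [0,L₂]`. -/
theorem statement1 {n : ℕ} (hn : 1 ≤ n) (L1 L2 : ℝ) (hL1 : 0 < L1) (hL2 : 0 < L2)
    (H : Jet2 n → ℝ) (hH : ContDiff ℝ (⊤ : ℕ∞) H)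
    (x : ℝ → ℝ → ℝ → Fin n → ℝ)
    (hx : ContDiff ℝ (⊤ : ℕ∞) (fun q : ℝ × ℝ × ℝ => x q.1 q.2.1 q.2.2)) (t : ℝ) :
    HasDerivAt (fun τ => ∫ a in (0:ℝ)..L1, ∫ b in (0:ℝ)..L2, H (jet2 x τ a b))
      ((∫ a in (0:ℝ)..L1, ∫ b in (0:ℝ)..L2,
          ∑ α : Fin n, pt2 x t a b α * varDer2 H x α t a b)
        + (∫ b in (0:ℝ)..L2, (edge1 H x t L1 b - edge1 H x t 0 b))
        + (∫ a in (0:ℝ)..L1, (edge2 H x t a L2 - edge2 H x t a 0))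
        + ((corner2 H x t L1 L2 - corner2 H x t 0 L2)
            - (corner2 H x t L1 0 - corner2 H x t 0 0))) t := by
  exact statement1_general 0 L1 0 L2 H (contDiff_infty.1 hH 3) x (contDiff_infty.1 hx 4) t
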